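/- For every integer n ≥ 1, the first singular homology group with complex coefficients H₁(F_n; ℂ) of the affine curve F_n = {(y,z) ∈ ℂ² : yⁿ + zⁿ = 1} is a ℂ-vector space of dimension (n−1)². -/

import Mathlib

open CategoryTheory AlgebraicTopology

/-- First singular homology with complex coefficients, as a functor
`TopCat ⥤ ModuleCat ℂ`: the singular simplicial set, followed by the free
`ℂ`-module functor, the alternating face map (singular chain) complex, and
homology in degree `1`. -/
noncomputable def H1 : TopCat ⥤ ModuleCat ℂ :=
  TopCat.toSSet ⋙ ((SimplicialObject.whiskering _ _).obj (ModuleCat.free ℂ)) ⋙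
    alternatingFaceMapComplex (ModuleCat ℂ) ⋙
    HomologicalComplex.homologyFunctor (ModuleCat ℂ) (ComplexShape.down ℕ) 1

/-- The Milnor fibre `F_n = {(y,z) ∈ ℂ² : yⁿ + zⁿ = 1}` of `yⁿ + zⁿ`. -/
abbrev FermatFibre (n : ℕ) : Type :=
  {v : ℂ × ℂ // v.1 ^ n + v.2 ^ n = 1}


namespace FermatH1

open Module

/-- Linear algebra: the dimension of the homology of `V2 → V1 → V0` via the dual. -/
theorem alg_dim {V2 V1 V0 W : Type*} [AddCommGroup V2] [Module ℂ V2] [AddCommGroup V1] [Module ℂ V1]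
    [AddCommGroup V0] [Module ℂ V0] [AddCommGroup W] [Module ℂ W] [FiniteDimensional ℂ W]
    (f : V2 →ₗ[ℂ] V1) (g : V1 →ₗ[ℂ] V0) (f' : V2 →ₗ[ℂ] LinearMap.ker g)
    (hf' : ∀ x, (f' x : V1) = f x)
    (Ψ : W →ₗ[ℂ] Dual ℂ V1) (h1 : ∀ w x, Ψ w (f x) = 0)
    (h2 : ∀ φ : Dual ℂ V1, (∀ x, φ (f x) = 0) → ∃ w, ∃ ψ : Dual ℂ V0, φ = Ψ w + ψ.comp g)
    (N : Submodule ℂ W) (hN : ∀ w, w ∈ N ↔ ∃ ψ : Dual ℂ V0, Ψ w = ψ.comp g) :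
    finrank ℂ (LinearMap.ker g ⧸ LinearMap.range f') + finrank ℂ N = finrank ℂ W := by
  let Θ : W →ₗ[ℂ] Dual ℂ (LinearMap.ker g ⧸ LinearMap.range f') :=
    { toFun := fun w => (LinearMap.range f').liftQ ((Ψ w).comp (LinearMap.ker g).subtype) (by
        rintro _ ⟨x, rfl⟩
        simp [hf', h1])
      map_add' := by
        intro a b
        ext x
        simp
      map_smul' := by
        intro a b
        ext x
        simp }
  have hΘ : ∀ w (x : LinearMap.ker g), Θ w (Submodule.Quotient.mk x) = Ψ w x := fun w x => rfl
  have hsurj : LinearMap.range Θ = ⊤ := by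
    rw [LinearMap.range_eq_top]
    intro φ
    obtain ⟨φ', hφ'⟩ := LinearMap.exists_extend (φ.comp (LinearMap.range f').mkQ)
    have hφ2 : ∀ x : LinearMap.ker g, φ' x = φ (Submodule.Quotient.mk x) := fun x =>
      LinearMap.congr_fun hφ' x
    obtain ⟨w, ψ, hw⟩ := h2 φ' (by
      intro x
      rw [← hf', hφ2]
      have : (Submodule.Quotient.mk (f' x) : LinearMap.ker g ⧸ LinearMap.range f') = 0 := by
        rw [Submodule.Quotient.mk_eq_zero]
        exact ⟨x, rfl⟩
      rw [this, map_zero])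
    refine ⟨w, ?_⟩
    ext x
    have := hφ2 x
    rw [hw] at this
    simpa [hΘ] using this
  have hker : LinearMap.ker Θ = N := by
    ext w
    rw [hN, LinearMap.mem_ker]
    constructor
    · intro h
      have : Ψ w ∈ (LinearMap.ker g).dualAnnihilator := by
        rw [Submodule.mem_dualAnnihilator]
        intro x hx
        have := hΘ w ⟨x, hx⟩
        rw [h] at this
        exact this.symm
      rw [← LinearMap.range_dualMap_eq_dualAnnihilator_ker] at this
      obtain ⟨ψ, hψ⟩ := this
      exact ⟨ψ, hψ.symm⟩
    · rintro ⟨ψ, hψ⟩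
      ext x
      have : g x = 0 := x.2
      simp [hΘ, hψ]
  have := LinearMap.finrank_range_add_finrank_ker Θ
  rw [hker, hsurj, finrank_top, Subspace.dual_finrank_eq] at this
  exact this

theorem sum3 {A B : ModuleCat.{0} ℂ} (d : Fin 3 → (A ⟶ B)) (x : A) :
    (∑ i : Fin 3, (-1 : ℤ) ^ (i : ℕ) • d i).hom x
      = (d 0).hom x - (d 1).hom x + (d 2).hom x := by
  simp [Fin.sum_univ_three]
  abel

theorem sum2 {A B : ModuleCat.{0} ℂ} (d : Fin 2 → (A ⟶ B)) (x : A) :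
    (∑ i : Fin 2, (-1 : ℤ) ^ (i : ℕ) • d i).hom x
      = (d 0).hom x - (d 1).hom x := by
  simp
  abel

open Simplicial in
theorem sset_dim (S : SSet.{0}) {W : Type*} [AddCommGroup W] [Module ℂ W] [FiniteDimensional ℂ W]
    (Ψ : W →ₗ[ℂ] (S _⦋1⦌ → ℂ))
    (h1 : ∀ w (τ : S _⦋2⦌), Ψ w (S.δ 0 τ) - Ψ w (S.δ 1 τ) + Ψ w (S.δ 2 τ) = 0)
    (h2 : ∀ φ : S _⦋1⦌ → ℂ, (∀ τ : S _⦋2⦌, φ (S.δ 0 τ) - φ (S.δ 1 τ) + φ (S.δ 2 τ) = 0) →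
      ∃ w, ∃ ψ : S _⦋0⦌ → ℂ, ∀ σ, φ σ = Ψ w σ + (ψ (S.δ 0 σ) - ψ (S.δ 1 σ)))
    (N : Submodule ℂ W) (hN : ∀ w, w ∈ N ↔
      ∃ ψ : S _⦋0⦌ → ℂ, ∀ σ, Ψ w σ = ψ (S.δ 0 σ) - ψ (S.δ 1 σ)) :
    finrank ℂ ((((SimplicialObject.whiskering _ _).obj (ModuleCat.free ℂ)) ⋙
    alternatingFaceMapComplex (ModuleCat ℂ) ⋙
    HomologicalComplex.homologyFunctor (ModuleCat ℂ) (ComplexShape.down ℕ) 1).obj S :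
      ModuleCat ℂ) + finrank ℂ N = finrank ℂ W := by
  let M := ((SimplicialObject.whiskering _ _).obj (ModuleCat.free ℂ)).obj S
  let K := (alternatingFaceMapComplex (ModuleCat ℂ)).obj M
  let e : K.homology 1 ≅ _ := K.homologyIsoSc' 2 1 0 (by simp) (by simp) ≪≫
    (K.sc' 2 1 0).moduleCatHomologyIso
  have he := e.toLinearEquiv.finrank_eq
  change finrank ℂ (K.homology 1) + _ = _
  rw [he]
  let f : (S _⦋2⦌ →₀ ℂ) →ₗ[ℂ] (S _⦋1⦌ →₀ ℂ) := (K.sc' 2 1 0).f.hom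
  let g : (S _⦋1⦌ →₀ ℂ) →ₗ[ℂ] (S _⦋0⦌ →₀ ℂ) := (K.sc' 2 1 0).g.hom
  have hf : ∀ τ, f (Finsupp.single τ 1) = Finsupp.single (S.δ 0 τ) 1 - Finsupp.single (S.δ 1 τ) 1
      + Finsupp.single (S.δ 2 τ) 1 := by
    intro τ
    have : (K.sc' 2 1 0).f = ∑ i : Fin 3, (-1 : ℤ) ^ (i : ℕ) • M.δ i :=
      alternatingFaceMapComplex_obj_d M 1
    have hδ : ∀ i : Fin 3, (M.δ i).hom (Finsupp.single τ 1) = Finsupp.single (S.δ i τ) 1 :=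
      fun i => ModuleCat.free_map_apply (S.δ i) τ
    change (K.sc' 2 1 0).f.hom _ = _
    rw [this]
    refine (sum3 (fun i => M.δ i) _).trans ?_
    rw [← hδ, ← hδ, ← hδ]
    rfl
  have hg : ∀ τ, g (Finsupp.single τ 1) = Finsupp.single (S.δ 0 τ) 1 - Finsupp.single (S.δ 1 τ) 1
      := by
    intro τ
    have : (K.sc' 2 1 0).g = ∑ i : Fin 2, (-1 : ℤ) ^ (i : ℕ) • M.δ i :=
      alternatingFaceMapComplex_obj_d M 0
    have hδ : ∀ i : Fin 2, (M.δ i).hom (Finsupp.single τ 1) = Finsupp.single (S.δ i τ) 1 :=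
      fun i => ModuleCat.free_map_apply (S.δ i) τ
    change (K.sc' 2 1 0).g.hom _ = _
    rw [this]
    refine (sum2 (fun i => M.δ i) _).trans ?_
    rw [← hδ, ← hδ]
    rfl
  let L1 := (Finsupp.llift ℂ ℂ ℂ (S _⦋1⦌))
  let L0 := (Finsupp.llift ℂ ℂ ℂ (S _⦋0⦌))
  have hL1 : ∀ φ x, L1 φ (Finsupp.single x 1) = φ x := by intro φ x; simp [L1]
  have hL0 : ∀ φ x, L0 φ (Finsupp.single x 1) = φ x := by intro φ x; simp [L0]
  have key : ∀ w (ψ : (S _⦋0⦌ →₀ ℂ) →ₗ[ℂ] ℂ), L1 (Ψ w) = ψ.comp g ↔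
      ∀ σ, Ψ w σ = ψ (Finsupp.single (S.δ 0 σ) 1) - ψ (Finsupp.single (S.δ 1 σ) 1) := by
    intro w ψ
    constructor
    · intro h σ
      have := LinearMap.congr_fun h (Finsupp.single σ 1)
      rw [hL1, LinearMap.comp_apply, hg, map_sub] at this
      exact this
    · intro h
      refine Finsupp.lhom_ext' fun σ => LinearMap.ext_ring ?_
      change L1 (Ψ w) (Finsupp.single σ 1) = ψ (g (Finsupp.single σ 1))
      rw [hL1, h, hg, map_sub]
  refine alg_dim f g (K.sc' 2 1 0).moduleCatToCycles (fun x => rfl)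
    (L1.toLinearMap.comp Ψ) ?_ ?_ N ?_
  · intro w
    have : (L1 (Ψ w)).comp f = 0 := by
      refine Finsupp.lhom_ext' fun σ => LinearMap.ext_ring ?_
      change L1 (Ψ w) (f (Finsupp.single σ 1)) = 0
      rw [hf, map_add, map_sub, hL1, hL1, hL1, h1]
    exact fun x => LinearMap.congr_fun this x
  · intro φ hφ
    obtain ⟨w, ψ, h⟩ := h2 (fun σ => φ (Finsupp.single σ 1)) (by
      intro τ
      rw [← map_sub, ← map_add, ← hf, hφ])
    refine ⟨w, L0 ψ, ?_⟩
    refine Finsupp.lhom_ext' fun σ => LinearMap.ext_ring ?_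
    change φ (Finsupp.single σ 1) = L1 (Ψ w) (Finsupp.single σ 1) + L0 ψ (g (Finsupp.single σ 1))
    rw [hg, map_sub, hL0, hL0, hL1]
    exact h σ
  · intro w
    rw [hN]
    constructor
    · rintro ⟨ψ, h⟩
      refine ⟨L0 ψ, (key _ _).2 ?_⟩
      intro σ
      rw [hL0, hL0, h]
    · rintro ⟨ψ, h⟩
      exact ⟨fun x => ψ (Finsupp.single x 1), (key _ _).1 h⟩



/-- The affine segment between two points of a standard simplex. -/
noncomputable def seg {ι : Type*} [Fintype ι] (a b : stdSimplex ℝ ι) : C(unitInterval, stdSimplex ℝ ι) where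
  toFun t := ⟨fun i => (1 - (t : ℝ)) * a i + t * b i, by
    refine ⟨fun i => ?_, ?_⟩
    · have h1 := a.2.1 i
      have h2 := b.2.1 i
      have h3 := t.2.1
      have h4 : 0 ≤ 1 - (t : ℝ) := sub_nonneg.2 t.2.2
      exact add_nonneg (mul_nonneg h4 h1) (mul_nonneg h3 h2)
    · rw [Finset.sum_add_distrib, ← Finset.mul_sum, ← Finset.mul_sum, stdSimplex.sum_eq_one,
        stdSimplex.sum_eq_one]
      ring⟩
  continuous_toFun := by
    refine Continuous.subtype_mk ?_ _
    fun_prop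

/-- One-cocycles, as functions on paths. -/
def IsCocycle {X : Type} [TopologicalSpace X] (F : C(unitInterval, X) → ℂ) : Prop :=
  ∀ τ : C(stdSimplex ℝ (Fin 3), X),
    F (τ.comp (seg (stdSimplex.vertex 0) (stdSimplex.vertex 1))) +
      F (τ.comp (seg (stdSimplex.vertex 1) (stdSimplex.vertex 2))) =
      F (τ.comp (seg (stdSimplex.vertex 0) (stdSimplex.vertex 2)))

theorem map_seg {m : ℕ} (f : Fin 2 → Fin m) (t : unitInterval) :
    stdSimplex.map f (stdSimplexHomeomorphUnitInterval.symm t) =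
      seg (stdSimplex.vertex (f 0)) (stdSimplex.vertex (f 1)) t := by
  ext i
  change FunOnFinite.linearMap ℝ ℝ f _ i = (1 - (t : ℝ)) * (Pi.single (f 0) (1 : ℝ) : Fin m → ℝ) i +
    t * (Pi.single (f 1) (1 : ℝ) : Fin m → ℝ) i
  rw [FunOnFinite.linearMap_apply_apply, Finset.sum_filter, Fin.sum_univ_two]
  have h0 : (stdSimplexHomeomorphUnitInterval.symm t) 0 = 1 - (t : ℝ) := rfl
  have h1 : (stdSimplexHomeomorphUnitInterval.symm t) 1 = (t : ℝ) := rfl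
  rw [h0, h1]
  simp only [Pi.single_apply, mul_ite, mul_one, mul_zero, eq_comm]

open Simplicial in
theorem H1_dim (X : Type) [TopologicalSpace X] {W : Type*} [AddCommGroup W] [Module ℂ W]
    [FiniteDimensional ℂ W]
    (Ψ : W →ₗ[ℂ] (C(unitInterval, X) → ℂ))
    (h1 : ∀ w, IsCocycle (Ψ w))
    (h2 : ∀ F : C(unitInterval, X) → ℂ, IsCocycle F →
      ∃ w, ∃ g : X → ℂ, ∀ σ, F σ = Ψ w σ + (g (σ 1) - g (σ 0)))
    (N : Submodule ℂ W) (hN : ∀ w, w ∈ N ↔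
      ∃ g : X → ℂ, ∀ σ, Ψ w σ = g (σ 1) - g (σ 0)) :
    finrank ℂ (H1.obj (TopCat.of X)) + finrank ℂ N = finrank ℂ W := by
  let S := TopCat.toSSet.obj (TopCat.of X)
  let e2 : S _⦋2⦌ ≃ C(stdSimplex ℝ (Fin 3), X) := TopCat.toSSetObjEquiv (TopCat.of X) _
  let e1' : S _⦋1⦌ ≃ C(stdSimplex ℝ (Fin 2), X) := TopCat.toSSetObjEquiv (TopCat.of X) _
  let e0' : S _⦋0⦌ ≃ C(stdSimplex ℝ (Fin 1), X) := TopCat.toSSetObjEquiv (TopCat.of X) _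
  let e1 : S _⦋1⦌ ≃ C(unitInterval, X) := e1'.trans
    (Homeomorph.continuousMapCongr stdSimplexHomeomorphUnitInterval (.refl X))
  have h21' : ∀ (i : Fin 3) (τ : S _⦋2⦌) x, e1' (S.δ i τ) x =
    (e2 τ) (stdSimplex.map (SimplexCategory.δ i) x) := fun i τ x => rfl
  have h10' : ∀ (i : Fin 2) (τ : S _⦋1⦌) x, e0' (S.δ i τ) x =
    (e1' τ) (stdSimplex.map (SimplexCategory.δ i) x) := fun i τ x => rfl
  have he1 : ∀ σ t, e1 σ t = e1' σ (stdSimplexHomeomorphUnitInterval.symm t) := fun _ _ => rfl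
  have h21 : ∀ (i : Fin 3) (τ : S _⦋2⦌), e1 (S.δ i τ) =
      (e2 τ).comp (seg (stdSimplex.vertex (i.succAbove 0)) (stdSimplex.vertex (i.succAbove 1))) := by
    intro i τ
    ext t
    rw [he1, h21', ContinuousMap.comp_apply]
    exact congrArg _ (map_seg _ t)
  let e0 : S _⦋0⦌ ≃ X :=
    { toFun := fun s => e0' s default
      invFun := fun x => e0'.symm (ContinuousMap.const _ x)
      left_inv := by
        intro s
        apply e0'.injective
        ext x
        rw [Equiv.apply_symm_apply, Subsingleton.elim x default]
        rfl
      right_inv := by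
        intro x
        simp }
  have h100 : ∀ σ, e0 (S.δ 0 σ) = e1 σ 1 := by
    intro σ
    rw [he1]
    change e0' (S.δ 0 σ) default = _
    rw [h10']
    congr 1
    have : (default : stdSimplex ℝ (Fin 1)) = stdSimplex.vertex 0 := Subsingleton.elim _ _
    rw [this]
    erw [stdSimplex.map_vertex]
    rw [Homeomorph.eq_symm_apply]
    rfl
  have h101 : ∀ σ, e0 (S.δ 1 σ) = e1 σ 0 := by
    intro σ
    rw [he1]
    change e0' (S.δ 1 σ) default = _
    rw [h10']
    congr 1
    have : (default : stdSimplex ℝ (Fin 1)) = stdSimplex.vertex 0 := Subsingleton.elim _ _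
    rw [this]
    erw [stdSimplex.map_vertex]
    rw [Homeomorph.eq_symm_apply]
    rfl
  have hc : ∀ F : C(unitInterval, X) → ℂ, IsCocycle F ↔
      ∀ τ : S _⦋2⦌, F (e1 (S.δ 0 τ)) - F (e1 (S.δ 1 τ)) + F (e1 (S.δ 2 τ)) = 0 := by
    intro F
    have k0 : (0 : Fin 3).succAbove 0 = 1 := rfl
    have k1 : (0 : Fin 3).succAbove 1 = 2 := rfl
    have k2 : (1 : Fin 3).succAbove 0 = 0 := rfl
    have k3 : (1 : Fin 3).succAbove 1 = 2 := rfl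
    have k4 : (2 : Fin 3).succAbove 0 = 0 := rfl
    have k5 : (2 : Fin 3).succAbove 1 = 1 := rfl
    constructor
    · intro h τ
      have := h (e2 τ)
      rw [h21, h21, h21, k0, k1, k2, k3, k4, k5]
      linear_combination this
    · intro h τ
      have := h (e2.symm τ)
      rw [h21, h21, h21, k0, k1, k2, k3, k4, k5, Equiv.apply_symm_apply] at this
      linear_combination this
  refine sset_dim S ((LinearEquiv.funCongrLeft ℂ ℂ e1).toLinearMap.comp Ψ) ?_ ?_ N ?_
  · intro w
    exact (hc _).1 (h1 w)
  · intro φ hφ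
    obtain ⟨w, g, h⟩ := h2 (fun σ => φ (e1.symm σ)) ((hc _).2 (by simpa using hφ))
    refine ⟨w, fun x => g (e0 x), fun σ => ?_⟩
    have := h (e1 σ)
    rw [Equiv.symm_apply_apply] at this
    rw [this]
    beta_reduce
    rw [h100, h101]
    rfl
  · intro w
    rw [hN]
    constructor
    · rintro ⟨g, h⟩
      refine ⟨fun x => g (e0 x), fun σ => ?_⟩
      beta_reduce
      rw [h100, h101]
      exact h (e1 σ)
    · rintro ⟨ψ, h⟩
      refine ⟨fun x => ψ (e0.symm x), fun σ => ?_⟩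
      obtain ⟨σ, rfl⟩ := e1.surjective σ
      rw [← h100, ← h101]
      beta_reduce
      rw [Equiv.symm_apply_apply, Equiv.symm_apply_apply]
      exact h σ

section calculus

variable {X : Type} [TopologicalSpace X]

/-- The straight path in a real topological vector space. -/
noncomputable def lin {E : Type*} [AddCommGroup E] [Module ℝ E] [TopologicalSpace E]
    [IsTopologicalAddGroup E] [ContinuousSMul ℝ E] (a b : E) : C(unitInterval, E) where
  toFun t := (1 - (t : ℝ)) • a + (t : ℝ) • b
  continuous_toFun := by fun_prop

theorem IsCocycle.tri {F : C(unitInterval, X) → ℂ} (hF : IsCocycle F)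
    {E : Type*} [AddCommGroup E] [Module ℝ E] [TopologicalSpace E]
    [IsTopologicalAddGroup E] [ContinuousSMul ℝ E] (H : C(E, X)) (a b c : E) :
    F (H.comp (lin a b)) + F (H.comp (lin b c)) = F (H.comp (lin a c)) := by
  let T : C(stdSimplex ℝ (Fin 3), E) :=
    ⟨fun x => x.1 0 • a + x.1 1 • b + x.1 2 • c, by
      have hc : ∀ i, Continuous fun x : stdSimplex ℝ (Fin 3) => x.1 i :=
        fun i => (continuous_apply i).comp continuous_subtype_val
      exact (((hc 0).smul continuous_const).add ((hc 1).smul continuous_const)).add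
        ((hc 2).smul continuous_const)⟩
  have h := hF (H.comp T)
  have h01 : T.comp (seg (stdSimplex.vertex 0) (stdSimplex.vertex 1)) = lin a b := by
    ext t
    simp [T, seg, lin]
  have h12 : T.comp (seg (stdSimplex.vertex 1) (stdSimplex.vertex 2)) = lin b c := by
    ext t
    simp [T, seg, lin]
  have h02 : T.comp (seg (stdSimplex.vertex 0) (stdSimplex.vertex 2)) = lin a c := by
    ext t
    simp [T, seg, lin]
  rwa [ContinuousMap.comp_assoc, ContinuousMap.comp_assoc, ContinuousMap.comp_assoc,
    h01, h12, h02] at h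

/-- Extension of a path to the real line. -/
noncomputable def ext (σ : C(unitInterval, X)) : C(ℝ, X) :=
  ⟨fun t => σ (Set.projIcc 0 1 zero_le_one t), by fun_prop⟩

theorem ext_lin (σ : C(unitInterval, X)) : (ext σ).comp (lin 0 1) = σ := by
  ext t
  simp [ext, lin]

theorem IsCocycle.const {F : C(unitInterval, X) → ℂ} (hF : IsCocycle F) (x : X) :
    F (ContinuousMap.const _ x) = 0 := by
  have h := hF.tri (ContinuousMap.const ℝ x) 0 0 0
  have : (ContinuousMap.const ℝ x).comp (lin 0 0) = ContinuousMap.const _ x := by ext; simp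
  rw [this] at h
  simpa using h

theorem IsCocycle.small {F : C(unitInterval, X) → ℂ} (hF : IsCocycle F) {A B : Set X}
    (hA : IsOpen A) (hB : IsOpen B) (hAB : ∀ x, x ∈ A ∨ x ∈ B)
    (h1 : ∀ σ : C(unitInterval, X), (∀ t, σ t ∈ A) → F σ = 0)
    (h2 : ∀ σ : C(unitInterval, X), (∀ t, σ t ∈ B) → F σ = 0) (σ : C(unitInterval, X)) :
    F σ = 0 := by
  let G : ℝ → ℂ := fun t => F ((ext σ).comp (lin 0 t))
  have hG : IsLocallyConstant G := by
    rw [IsLocallyConstant.iff_eventually_eq]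
    intro t
    have : ∃ ε > 0, ∀ s ∈ Metric.ball t ε, F ((ext σ).comp (lin t s)) = 0 := by
      rcases hAB (ext σ t) with h | h
      · obtain ⟨ε, hε, hs⟩ := Metric.isOpen_iff.1 (hA.preimage (ext σ).continuous) t h
        refine ⟨ε, hε, fun s hs' => h1 _ fun u => ?_⟩
        apply hs
        exact (convex_ball t ε) (Metric.mem_ball_self hε) hs' (sub_nonneg.2 u.2.2) u.2.1 (by ring)
      · obtain ⟨ε, hε, hs⟩ := Metric.isOpen_iff.1 (hB.preimage (ext σ).continuous) t h
        refine ⟨ε, hε, fun s hs' => h2 _ fun u => ?_⟩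
        apply hs
        exact (convex_ball t ε) (Metric.mem_ball_self hε) hs' (sub_nonneg.2 u.2.2) u.2.1 (by ring)
    obtain ⟨ε, hε, hs⟩ := this
    filter_upwards [Metric.ball_mem_nhds t hε] with s hs'
    have := hF.tri (ext σ) 0 t s
    rw [hs s hs', add_zero] at this
    exact this.symm
  have h := hG.apply_eq_of_preconnectedSpace 1 0
  have h0 : G 0 = 0 := by
    have := hF.tri (ext σ) 0 0 0
    simpa [G] using this
  rw [h0] at h
  simpa [G, ext_lin] using h

theorem IsCocycle.contract {F : C(unitInterval, X) → ℂ} (hF : IsCocycle F) {A : Set X}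
    (R : C(unitInterval × A, X)) (hR1 : ∀ x, R (1, x) = x)
    (hR0 : ∀ σ : C(unitInterval, A), ∀ t, R (0, σ t) = R (0, σ 0)) :
    ∃ g : X → ℂ, ∀ σ : C(unitInterval, X), (∀ t, σ t ∈ A) → F σ = g (σ 1) - g (σ 0) := by
  classical
  let P : A → C(unitInterval, X) := fun x => R.comp ⟨fun s => (s, x), by fun_prop⟩
  refine ⟨fun x => if hx : x ∈ A then F (P ⟨x, hx⟩) else 0, fun σ hσ => ?_⟩
  let σ' : C(unitInterval, A) := ⟨fun t => ⟨σ t, hσ t⟩, by fun_prop⟩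
  beta_reduce
  rw [dif_pos (hσ 1), dif_pos (hσ 0)]
  let H : C(ℝ × ℝ, X) := R.comp ⟨fun p => (Set.projIcc 0 1 zero_le_one p.1,
    σ' (Set.projIcc 0 1 zero_le_one p.2)), by fun_prop⟩
  have e1 := hF.tri H (0, 0) (1, 0) (1, 1)
  have e2 := hF.tri H (0, 0) (0, 1) (1, 1)
  have k1 : H.comp (lin (0, 0) (1, 0)) = P (σ' 0) := by
    ext t
    simp [H, P, lin]
  have k2 : H.comp (lin (1, 0) (1, 1)) = σ := by
    ext t
    simp [H, lin, hR1, σ']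
  have k3 : H.comp (lin (0, 0) (0, 1)) = ContinuousMap.const _ (R (0, σ' 0)) := by
    ext t
    simp only [H, lin, ContinuousMap.comp_apply, ContinuousMap.coe_mk, ContinuousMap.const_apply]
    rw [← hR0 σ' t]
    simp
  have k4 : H.comp (lin (0, 1) (1, 1)) = P (σ' 1) := by
    ext t
    simp [H, P, lin]
  rw [k1, k2] at e1
  rw [k3, k4, hF.const] at e2
  change F σ = F (P (σ' 1)) - F (P (σ' 0))
  linear_combination e1 - e2

theorem exists_lift_simplex (h : C(stdSimplex ℝ (Fin 3), AddCircle (1 : ℝ))) :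
    ∃ L : C(stdSimplex ℝ (Fin 3), ℝ), ∀ x, (L x : AddCircle (1 : ℝ)) = h x := by
  let C : C(unitInterval × stdSimplex ℝ (Fin 3), stdSimplex ℝ (Fin 3)) :=
    ⟨fun p => seg (stdSimplex.vertex 0) p.2 p.1, by
      refine Continuous.subtype_mk ?_ _
      refine continuous_pi fun i => ?_
      have : Continuous fun p : unitInterval × stdSimplex ℝ (Fin 3) => p.2.1 i :=
        (continuous_apply i).comp (continuous_subtype_val.comp continuous_snd)
      have h2 : Continuous fun p : unitInterval × stdSimplex ℝ (Fin 3) => (p.1 : ℝ) := by fun_prop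
      exact ((continuous_const.sub h2).mul continuous_const).add (h2.mul this)⟩
  obtain ⟨e, he⟩ := QuotientAddGroup.mk_surjective (h (stdSimplex.vertex 0))
  have cov := AddCircle.isCoveringMap_coe (1 : ℝ)
  have H0 : ∀ a, (h.comp C) (0, a) = ((ContinuousMap.const (stdSimplex ℝ (Fin 3)) e) a : ℝ) := by
    intro a
    rw [ContinuousMap.const_apply]
    refine Eq.trans ?_ he.symm
    change h (C (0, a)) = _
    congr 1
    ext i
    change (1 - ((0 : unitInterval) : ℝ)) * _ + ((0 : unitInterval) : ℝ) * _ = _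
    simp
  refine ⟨(cov.liftHomotopy (h.comp C) (ContinuousMap.const _ e) H0).comp
    ⟨fun x => (1, x), by fun_prop⟩, fun x => ?_⟩
  have := congrFun (cov.liftHomotopy_lifts (h.comp C) (ContinuousMap.const _ e) H0) (1, x)
  refine this.trans ?_
  change h (C (1, x)) = _
  congr 1
  ext i
  change (1 - ((1 : unitInterval) : ℝ)) * _ + ((1 : unitInterval) : ℝ) * _ = _
  simp

theorem exists_cocycle (h : C(X, AddCircle (1 : ℝ))) :
    ∃ F : C(unitInterval, X) → ℂ, IsCocycle F ∧
      ∀ (σ : C(unitInterval, X)) (l : unitInterval → ℝ), Continuous l →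
        (∀ t, (l t : AddCircle (1 : ℝ)) = h (σ t)) → F σ = ((l 1 - l 0 : ℝ) : ℂ) := by
  have cov := AddCircle.isCoveringMap_coe (1 : ℝ)
  have hl : ∀ σ : C(unitInterval, X), ∃ l : C(unitInterval, ℝ),
      ∀ t, (l t : AddCircle (1 : ℝ)) = h (σ t) := by
    intro σ
    obtain ⟨e, he⟩ := QuotientAddGroup.mk_surjective (h (σ 0))
    obtain ⟨Γ, h1, -⟩ := cov.exists_path_lifts (h.comp σ) e he.symm
    exact ⟨Γ, fun t => congrFun h1 t⟩
  choose l hl using hl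
  have key : ∀ (σ : C(unitInterval, X)) (l' : unitInterval → ℝ), Continuous l' →
        (∀ t, (l' t : AddCircle (1 : ℝ)) = h (σ t)) → l σ 1 - l σ 0 = l' 1 - l' 0 := by
    intro σ l' hl' h'
    have : (fun t => l σ t - l σ 0 + l' 0) = l' := by
      refine cov.eq_of_comp_eq (by fun_prop) hl' ?_ 0 (by simp)
      funext t
      simp [hl, h']
    have := congrFun this 1
    linarith
  refine ⟨fun σ => ((l σ 1 - l σ 0 : ℝ) : ℂ), ?_, fun σ l' c h' => by
    beta_reduce
    rw [key σ l' c h']⟩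
  intro τ
  obtain ⟨L, hL⟩ := exists_lift_simplex (h.comp τ)
  have hs : ∀ a b : stdSimplex ℝ (Fin 3), l (τ.comp (seg a b)) 1 - l (τ.comp (seg a b)) 0
      = L b - L a := by
    intro a b
    rw [key _ (L.comp (seg a b)) (map_continuous _) (fun t => hL _)]
    have e1 : seg a b 1 = b := by
      ext i
      change (1 - ((1 : unitInterval) : ℝ)) * _ + ((1 : unitInterval) : ℝ) * _ = _
      simp
    have e0 : seg a b 0 = a := by
      ext i
      change (1 - ((0 : unitInterval) : ℝ)) * _ + ((0 : unitInterval) : ℝ) * _ = _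
      simp
    rw [ContinuousMap.comp_apply, ContinuousMap.comp_apply, e1, e0]
  simp only [hs]
  push_cast
  ring

end calculus

section MV

variable {X : Type} [TopologicalSpace X]

theorem isCocycle_coboundary (g : X → ℂ) :
    IsCocycle (fun σ : C(unitInterval, X) => g (σ 1) - g (σ 0)) := by
  intro τ
  have e1 : ∀ a b : stdSimplex ℝ (Fin 3), seg a b 1 = b := by
    intro a b
    ext i
    change (1 - ((1 : unitInterval) : ℝ)) * _ + ((1 : unitInterval) : ℝ) * _ = _
    simp
  have e0 : ∀ a b : stdSimplex ℝ (Fin 3), seg a b 0 = a := by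
    intro a b
    ext i
    change (1 - ((0 : unitInterval) : ℝ)) * _ + ((0 : unitInterval) : ℝ) * _ = _
    simp
  simp only [ContinuousMap.comp_apply, e1, e0]
  ring

theorem IsCocycle.sub {F G : C(unitInterval, X) → ℂ} (hF : IsCocycle F) (hG : IsCocycle G) :
    IsCocycle (fun σ => F σ - G σ) := by
  intro τ
  linear_combination hF τ - hG τ

/-- If a cocycle is a coboundary on `A` and on `B`, with compatible primitives, it is one. -/
theorem IsCocycle.glue {F : C(unitInterval, X) → ℂ} (hF : IsCocycle F) {A B : Set X}
    (hA : IsOpen A) (hB : IsOpen B) (hAB : ∀ x, x ∈ A ∨ x ∈ B) (gA gB : X → ℂ)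
    (h1 : ∀ σ : C(unitInterval, X), (∀ t, σ t ∈ A) → F σ = gA (σ 1) - gA (σ 0))
    (h2 : ∀ σ : C(unitInterval, X), (∀ t, σ t ∈ B) → F σ = gB (σ 1) - gB (σ 0))
    (h : ∀ x, x ∈ A → x ∈ B → gA x = gB x) :
    ∃ g : X → ℂ, ∀ σ, F σ = g (σ 1) - g (σ 0) := by
  classical
  let g : X → ℂ := fun x => if x ∈ A then gA x else gB x
  have kA : ∀ x ∈ A, g x = gA x := fun x hx => if_pos hx
  have kB : ∀ x ∈ B, g x = gB x := by
    intro x hx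
    by_cases hx' : x ∈ A
    · rw [kA x hx', h x hx' hx]
    · exact if_neg hx'
  refine ⟨g, fun σ => sub_eq_zero.1 ?_⟩
  refine (hF.sub (isCocycle_coboundary g)).small hA hB hAB ?_ ?_ σ
  · intro σ hσ
    beta_reduce
    rw [kA _ (hσ 0), kA _ (hσ 1), h1 σ hσ, sub_self]
  · intro σ hσ
    beta_reduce
    rw [kB _ (hσ 0), kB _ (hσ 1), h2 σ hσ, sub_self]

theorem const_along {K : Type*} {A : Set X} (p : X → K) (hp : ∀ i, IsOpen {x | x ∈ A ∧ p x = i})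
    (σ : C(unitInterval, X)) (hσ : ∀ t, σ t ∈ A) (s t : unitInterval) : p (σ s) = p (σ t) := by
  have : IsLocallyConstant (fun t => p (σ t)) := by
    rw [IsLocallyConstant.iff_eventually_eq]
    intro t
    filter_upwards [((hp (p (σ t))).preimage σ.continuous).mem_nhds ⟨hσ t, rfl⟩] with s hs
    exact hs.2
  exact this.apply_eq_of_preconnectedSpace s t

theorem bump_continuousAt {A B D : Set X} (hB : IsOpen B) (hD : IsOpen D)
    (hDc : IsOpen ((A ∩ B) \ D)) (hA : IsOpen A) (t : C(X, ℝ))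
    (ht : ∀ x, x ∉ B → t x = 0) (x : X) (hx : x ∈ A) :
    ContinuousAt (D.indicator t) x := by
  by_cases hxD : x ∈ D
  · refine (t.continuous.continuousAt (x := x)).congr ?_
    filter_upwards [hD.mem_nhds hxD] with y hy
    rw [Set.indicator_of_mem hy]
  · by_cases hxB : x ∈ B
    · refine (continuousAt_const (y := (0 : ℝ))).congr ?_
      filter_upwards [hDc.mem_nhds ⟨⟨hx, hxB⟩, hxD⟩] with y hy
      rw [Set.indicator_of_notMem hy.2]
    · have h0 := ht x hxB
      rw [ContinuousAt, Set.indicator_of_notMem hxD]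
      have : Filter.Tendsto (fun y => |t y|) (nhds x) (nhds 0) := by
        have := (t.continuous.abs).tendsto x
        simpa [h0] using this
      refine squeeze_zero_norm (fun y => ?_) this
      by_cases hy : y ∈ D
      · rw [Set.indicator_of_mem hy]
        rfl
      · rw [Set.indicator_of_notMem hy]
        simp

theorem exists_Psi {K L : Type} [Fintype K] [Fintype L] {A B : Set X}
    (hA : IsOpen A) (hB : IsOpen B) (hAB : ∀ x, x ∈ A ∨ x ∈ B) (p : X → K) (q : X → L)
    (hp : ∀ i, IsOpen {x | x ∈ A ∧ p x = i}) (hq : ∀ i, IsOpen {x | x ∈ B ∧ q x = i})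
    (t : C(X, ℝ)) (ht0 : ∀ x, x ∉ B → t x = 0) (ht1 : ∀ x, x ∉ A → t x = 1) :
    ∃ (Ψ : (K × L → ℂ) →ₗ[ℂ] (C(unitInterval, X) → ℂ)) (a b : (K × L → ℂ) → X → ℂ),
      (∀ w, IsCocycle (Ψ w)) ∧
      (∀ w (σ : C(unitInterval, X)), (∀ t, σ t ∈ A) → Ψ w σ = a w (σ 1) - a w (σ 0)) ∧
      (∀ w (σ : C(unitInterval, X)), (∀ t, σ t ∈ B) → Ψ w σ = b w (σ 1) - b w (σ 0)) ∧
      (∀ w x, x ∈ A → x ∈ B → a w x - b w x = w (p x, q x)) := by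
  classical
  let D : K × L → Set X := fun ij => {x | x ∈ A ∧ p x = ij.1} ∩ {x | x ∈ B ∧ q x = ij.2}
  have hD : ∀ ij, IsOpen (D ij) := fun ij => (hp _).inter (hq _)
  have hDc : ∀ ij, IsOpen ((A ∩ B) \ D ij) := by
    intro ij
    have : (A ∩ B) \ D ij = ⋃ kl ∈ {kl : K × L | kl ≠ ij}, D kl := by
      ext x
      simp only [D, Set.mem_diff, Set.mem_inter_iff, Set.mem_setOf_eq, Set.mem_iUnion]
      constructor
      · rintro ⟨⟨h1, h2⟩, h3⟩
        refine ⟨(p x, q x), ?_, ⟨h1, rfl⟩, ⟨h2, rfl⟩⟩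
        rintro rfl
        exact h3 ⟨⟨h1, rfl⟩, ⟨h2, rfl⟩⟩
      · rintro ⟨⟨k, l⟩, h, ⟨h1, h2⟩, h3, h4⟩
        refine ⟨⟨h1, h3⟩, ?_⟩
        rintro ⟨⟨-, h5⟩, -, h6⟩
        apply h
        ext
        · exact h2.symm.trans h5
        · exact h4.symm.trans h6
    rw [this]
    exact isOpen_biUnion fun kl _ => hD kl
  let t' : C(X, ℝ) := t - 1
  have ht' : ∀ x, x ∉ A → t' x = 0 := by
    intro x hx
    simp [t', ht1 x hx]
  let α : K × L → X → ℝ := fun ij => (D ij).indicator t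
  let β : K × L → X → ℝ := fun ij => (D ij).indicator t'
  have hα : ∀ ij x, x ∈ A → ContinuousAt (α ij) x := fun ij x hx =>
    bump_continuousAt hB (hD ij) (hDc ij) hA t ht0 x hx
  have hβ : ∀ ij x, x ∈ B → ContinuousAt (β ij) x := fun ij x hx =>
    bump_continuousAt hA (hD ij) (by rw [Set.inter_comm]; exact hDc ij) hB t' ht' x hx
  have hαβ : ∀ ij x, α ij x - β ij x = if x ∈ D ij then 1 else 0 := by
    intro ij x
    by_cases hx : x ∈ D ij
    · simp [α, β, hx, t']
    · simp [α, β, hx]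
  have hcoe : ∀ ij x, (α ij x : AddCircle (1 : ℝ)) = (β ij x : AddCircle (1 : ℝ)) := by
    intro ij x
    have h1 : α ij x = β ij x + (if x ∈ D ij then 1 else 0) := by
      rw [← hαβ]; ring
    rw [h1]
    split_ifs
    · simp
    · simp
  have hcont : ∀ ij, Continuous fun x => (α ij x : AddCircle (1 : ℝ)) := by
    intro ij
    rw [continuous_iff_continuousAt]
    intro x
    have hc : Continuous (fun r : ℝ => (r : AddCircle (1 : ℝ))) := AddCircle.continuous_mk' 1
    rcases hAB x with h | h
    · exact hc.continuousAt.comp (hα ij x h)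
    · simp only [hcoe]
      exact hc.continuousAt.comp (hβ ij x h)
  choose F hF hFl using fun ij => exists_cocycle (X := X) ⟨_, hcont ij⟩
  have hFA : ∀ ij (σ : C(unitInterval, X)), (∀ t, σ t ∈ A) →
      F ij σ = ((α ij (σ 1) : ℝ) : ℂ) - ((α ij (σ 0) : ℝ) : ℂ) := by
    intro ij σ hσ
    rw [hFl ij σ (fun t => α ij (σ t)) ?_ (fun t => rfl)]
    · push_cast
      rfl
    · rw [continuous_iff_continuousAt]
      exact fun s => ContinuousAt.comp (f := σ) (hα ij _ (hσ s)) σ.continuous.continuousAt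
  have hFB : ∀ ij (σ : C(unitInterval, X)), (∀ t, σ t ∈ B) →
      F ij σ = ((β ij (σ 1) : ℝ) : ℂ) - ((β ij (σ 0) : ℝ) : ℂ) := by
    intro ij σ hσ
    rw [hFl ij σ (fun t => β ij (σ t)) ?_ (fun t => (hcoe ij _).symm)]
    · push_cast
      rfl
    · rw [continuous_iff_continuousAt]
      exact fun s => ContinuousAt.comp (f := σ) (hβ ij _ (hσ s)) σ.continuous.continuousAt
  have hΨ : ∀ w σ, Fintype.linearCombination ℂ F w σ = ∑ ij, w ij * F ij σ := by
    intro w σ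
    simp [Fintype.linearCombination_apply]
  refine ⟨Fintype.linearCombination ℂ F, fun w x => ∑ ij, w ij * ((α ij x : ℝ) : ℂ),
    fun w x => ∑ ij, w ij * ((β ij x : ℝ) : ℂ), ?_, ?_, ?_, ?_⟩
  · intro w τ
    rw [hΨ, hΨ, hΨ, ← Finset.sum_add_distrib]
    refine Finset.sum_congr rfl fun ij _ => ?_
    rw [← mul_add, hF ij τ]
  · intro w σ hσ
    rw [hΨ, ← Finset.sum_sub_distrib]
    refine Finset.sum_congr rfl fun ij _ => ?_
    rw [hFA ij σ hσ, mul_sub]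
  · intro w σ hσ
    rw [hΨ, ← Finset.sum_sub_distrib]
    refine Finset.sum_congr rfl fun ij _ => ?_
    rw [hFB ij σ hσ, mul_sub]
  · intro w x hxA hxB
    rw [← Finset.sum_sub_distrib]
    rw [Finset.sum_eq_single (p x, q x)]
    · rw [← mul_sub, ← Complex.ofReal_sub, hαβ, if_pos ⟨⟨hxA, rfl⟩, hxB, rfl⟩]
      simp
    · intro kl _ h
      rw [← mul_sub, ← Complex.ofReal_sub, hαβ, if_neg]
      · simp
      · rintro ⟨⟨-, h1⟩, -, h2⟩
        exact h (by rw [h1, h2])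
    · simp

theorem finrank_N (K L : Type) [Fintype K] [Fintype L] [Nonempty K] [Nonempty L]
    (M : ((K → ℂ) × (L → ℂ)) →ₗ[ℂ] (K × L → ℂ)) (hM : ∀ b c i j, M (b, c) (i, j) = b i + c j) :
    finrank ℂ (LinearMap.range M) + 1 = Fintype.card K + Fintype.card L := by
  have h := LinearMap.finrank_range_add_finrank_ker M
  have hk : LinearMap.ker M = ℂ ∙ ((fun _ => 1, fun _ => -1) : (K → ℂ) × (L → ℂ)) := by
    ext ⟨b, c⟩
    rw [LinearMap.mem_ker, Submodule.mem_span_singleton]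
    constructor
    · intro hbc
      have h0 : ∀ i j, b i + c j = 0 := by
        intro i j
        rw [← hM, hbc]
        rfl
      obtain ⟨i0⟩ := ‹Nonempty K›
      obtain ⟨j0⟩ := ‹Nonempty L›
      refine ⟨b i0, ?_⟩
      ext i
      · simp only [Prod.smul_fst, Pi.smul_apply, smul_eq_mul]
        linear_combination h0 i0 j0 - h0 i j0
      · simp only [Prod.smul_snd, Pi.smul_apply, smul_eq_mul]
        linear_combination - h0 i0 i
    · rintro ⟨a, ha⟩
      rw [← ha]
      ext ⟨i, j⟩
      change M (_, _) (i, j) = 0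
      rw [hM]
      simp
  rw [hk, finrank_span_singleton] at h
  · rw [h]
    simp
  · intro h0
    obtain ⟨i0⟩ := ‹Nonempty K›
    have := congrFun (congrArg Prod.fst h0) i0
    simp at this

theorem mv {K L : Type} [Fintype K] [Fintype L] [Nonempty K] [Nonempty L] {A B : Set X}
    (hA : IsOpen A) (hB : IsOpen B) (hAB : ∀ x, x ∈ A ∨ x ∈ B) (p : X → K) (q : X → L)
    (hp : ∀ i, IsOpen {x | x ∈ A ∧ p x = i}) (hq : ∀ i, IsOpen {x | x ∈ B ∧ q x = i})
    (t : C(X, ℝ)) (ht0 : ∀ x, x ∉ B → t x = 0) (ht1 : ∀ x, x ∉ A → t x = 1)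
    (jA : ∀ x ∈ A, ∀ y ∈ A, p x = p y →
      ∃ σ : C(unitInterval, X), σ 0 = x ∧ σ 1 = y ∧ ∀ t, σ t ∈ A)
    (jB : ∀ x ∈ B, ∀ y ∈ B, q x = q y →
      ∃ σ : C(unitInterval, X), σ 0 = x ∧ σ 1 = y ∧ ∀ t, σ t ∈ B)
    (jAB : ∀ x ∈ A ∩ B, ∀ y ∈ A ∩ B, p x = p y → q x = q y →
      ∃ σ : C(unitInterval, X), σ 0 = x ∧ σ 1 = y ∧ ∀ t, σ t ∈ A ∩ B)
    (ne : ∀ i j, ∃ x, x ∈ A ∧ x ∈ B ∧ p x = i ∧ q x = j)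
    (vA : ∀ F : C(unitInterval, X) → ℂ, IsCocycle F → ∃ g : X → ℂ,
      ∀ σ : C(unitInterval, X), (∀ t, σ t ∈ A) → F σ = g (σ 1) - g (σ 0))
    (vB : ∀ F : C(unitInterval, X) → ℂ, IsCocycle F → ∃ g : X → ℂ,
      ∀ σ : C(unitInterval, X), (∀ t, σ t ∈ B) → F σ = g (σ 1) - g (σ 0)) :
    finrank ℂ (H1.obj (TopCat.of X)) + (Fintype.card K + Fintype.card L) =
      Fintype.card K * Fintype.card L + 1 := by
  obtain ⟨Ψ, a, b, hc, ha, hb, hab⟩ := exists_Psi hA hB hAB p q hp hq t ht0 ht1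
  choose x xA xB xp xq using ne
  let M : ((K → ℂ) × (L → ℂ)) →ₗ[ℂ] (K × L → ℂ) :=
    { toFun := fun bc ij => bc.1 ij.1 + bc.2 ij.2
      map_add' := by
        intro u v
        ext ij
        simp only [Prod.fst_add, Prod.snd_add, Pi.add_apply]
        ring
      map_smul' := by
        intro r v
        ext ij
        simp [mul_add] }
  have hM : ∀ b c i j, M (b, c) (i, j) = b i + c j := fun _ _ _ _ => rfl
  have hd := H1_dim X Ψ hc ?_ (LinearMap.range M) ?_
  · have := finrank_N K L M hM
    rw [Module.finrank_fintype_fun_eq_card, Fintype.card_prod] at hd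
    omega
  · intro F hF
    obtain ⟨gA, hgA⟩ := vA F hF
    obtain ⟨gB, hgB⟩ := vB F hF
    let w : K × L → ℂ := fun ij => gA (x ij.1 ij.2) - gB (x ij.1 ij.2)
    obtain ⟨g, hg⟩ := (hF.sub (hc w)).glue hA hB hAB (fun y => gA y - a w y)
      (fun y => gB y - b w y)
      (by
        intro σ hσ
        beta_reduce
        rw [hgA σ hσ, ha w σ hσ]
        ring)
      (by
        intro σ hσ
        beta_reduce
        rw [hgB σ hσ, hb w σ hσ]
        ring)
      (by
        intro y yA yB
        have h1 := hab w y yA yB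
        obtain ⟨σ, h0, h1', hσ⟩ := jAB (x (p y) (q y)) ⟨xA _ _, xB _ _⟩ y ⟨yA, yB⟩
          (xp _ _) (xq _ _)
        have e1 := hgA σ fun t => (hσ t).1
        have e2 := hgB σ fun t => (hσ t).2
        rw [h0, h1'] at e1 e2
        simp only [w] at h1
        linear_combination e2 - e1 - h1)
    refine ⟨w, g, fun σ => ?_⟩
    have := hg σ
    linear_combination this
  · intro w
    constructor
    · rintro ⟨⟨u, v⟩, rfl⟩
      refine (hc _).glue hA hB hAB (fun y => a (M (u, v)) y - u (p y))
        (fun y => b (M (u, v)) y + v (q y)) ?_ ?_ ?_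
      · intro σ hσ
        beta_reduce
        rw [ha _ σ hσ, const_along p hp σ hσ 0 1]
        ring
      · intro σ hσ
        beta_reduce
        rw [hb _ σ hσ, const_along q hq σ hσ 0 1]
        ring
      · intro y yA yB
        have := hab (M (u, v)) y yA yB
        rw [hM] at this
        linear_combination this
    · rintro ⟨g, hg⟩
      obtain ⟨i0⟩ := ‹Nonempty K›
      obtain ⟨j0⟩ := ‹Nonempty L›
      refine ⟨(fun i => a w (x i j0) - g (x i j0), fun j => g (x i0 j) - b w (x i0 j)), ?_⟩
      ext ⟨i, j⟩
      rw [hM]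
      obtain ⟨σ, s0, s1, hσ⟩ := jA (x i j0) (xA _ _) (x i j) (xA _ _) (by rw [xp, xp])
      obtain ⟨ρ, r0, r1, hρ⟩ := jB (x i0 j) (xB _ _) (x i j) (xB _ _) (by rw [xq, xq])
      have e1 := ha w σ hσ
      have e2 := hb w ρ hρ
      have e3 := hab w (x i j) (xA _ _) (xB _ _)
      rw [hg, s0, s1] at e1
      rw [hg, r0, r1] at e2
      rw [xp, xq] at e3
      linear_combination e3 + e1 - e2

end MV

section Geometry

variable {n : ℕ}

/-- Principal `n`-th root. -/
noncomputable def rt (n : ℕ) (w : ℂ) : ℂ := w ^ ((n : ℂ)⁻¹)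

theorem rt_pow (hn : n ≠ 0) (w : ℂ) : rt n w ^ n = w := Complex.cpow_nat_inv_pow w hn

theorem rt_ne (hn : n ≠ 0) {w : ℂ} (hw : 1 / 3 < w.re) : rt n w ≠ 0 := by
  intro h
  have := rt_pow hn w
  rw [h, zero_pow hn] at this
  rw [← this] at hw
  norm_num at hw

theorem rt_cont {w : ℂ} (hw : 1 / 3 < w.re) : ContinuousAt (rt n) w := by
  unfold rt
  apply continuousAt_cpow_const
  left
  linarith

theorem rt_one : rt n 1 = 1 := by simp [rt]

/-- the open set where `Re zⁿ > 1/3` -/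
def setA (n : ℕ) : Set (FermatFibre n) := {x | 1 / 3 < (x.1.2 ^ n).re}

/-- the swap of the two coordinates -/
def swp (n : ℕ) : C(FermatFibre n, FermatFibre n) where
  toFun x := ⟨(x.1.2, x.1.1), by rw [add_comm]; exact x.2⟩
  continuous_toFun := by fun_prop

theorem swp_swp (x : FermatFibre n) : swp n (swp n x) = x := rfl

theorem isOpen_setA : IsOpen (setA n) := by
  apply isOpen_lt continuous_const
  apply Complex.continuous_re.comp
  fun_prop

theorem re_add (x : FermatFibre n) : (x.1.1 ^ n).re + (x.1.2 ^ n).re = 1 := by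
  have := congrArg Complex.re x.2
  simpa using this

noncomputable def pc (x : FermatFibre n) : ℂ := x.1.2 / rt n (x.1.2 ^ n)

abbrev Rts (n : ℕ) : Type := {ζ : ℂ // ζ ∈ Polynomial.nthRootsFinset n (1 : ℂ)}

theorem card_Rts (hn : n ≠ 0) : Fintype.card (Rts n) = n := by
  rw [Fintype.card_coe]
  exact (Complex.isPrimitiveRoot_exp n hn).card_nthRootsFinset

theorem Rts_pow (hn : n ≠ 0) (i : Rts n) : (i : ℂ) ^ n = 1 :=
  (Polynomial.mem_nthRootsFinset (Nat.pos_of_ne_zero hn) (1 : ℂ)).1 i.2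

theorem pc_mem (hn : n ≠ 0) {x : FermatFibre n} (hx : x ∈ setA n) :
    pc x ∈ Polynomial.nthRootsFinset n (1 : ℂ) := by
  rw [Polynomial.mem_nthRootsFinset (Nat.pos_of_ne_zero hn)]
  unfold pc
  rw [div_pow, rt_pow hn]
  apply div_self
  intro h
  have : 1 / 3 < (x.1.2 ^ n).re := hx
  rw [h] at this
  norm_num at this

open Classical in
noncomputable def pr (o : Rts n) (x : FermatFibre n) : Rts n :=
  if h : pc x ∈ Polynomial.nthRootsFinset n (1 : ℂ) then ⟨pc x, h⟩ else o

theorem pr_eq (hn : n ≠ 0) (o : Rts n) {x : FermatFibre n} (hx : x ∈ setA n) :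
    (pr o x : ℂ) = pc x := by
  unfold pr
  rw [dif_pos (pc_mem hn hx)]

theorem pc_mul (hn : n ≠ 0) {x : FermatFibre n} (hx : x ∈ setA n) :
    pc x * rt n (x.1.2 ^ n) = x.1.2 := by
  unfold pc
  exact div_mul_cancel₀ _ (rt_ne hn hx)

theorem pc_cont (hn : n ≠ 0) {x : FermatFibre n} (hx : x ∈ setA n) :
    ContinuousAt (pc (n := n)) x := by
  unfold pc
  refine ContinuousAt.div (by fun_prop) ?_ (rt_ne hn hx)
  exact ContinuousAt.comp (f := fun x : FermatFibre n => x.1.2 ^ n) (rt_cont hx) (by fun_prop)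

theorem pr_open (hn : n ≠ 0) (o i : Rts n) : IsOpen {x | x ∈ setA n ∧ pr o x = i} := by
  have hc : ContinuousOn (pc (n := n)) (setA n) := fun x hx => (pc_cont hn hx).continuousWithinAt
  have hfin : IsOpen (((Polynomial.nthRootsFinset n (1 : ℂ)).erase (i : ℂ) : Set ℂ)ᶜ) :=
    (Finset.finite_toSet _).isClosed.isOpen_compl
  convert hc.isOpen_inter_preimage isOpen_setA hfin using 1
  ext x
  constructor
  · rintro ⟨h1, h2⟩
    refine ⟨h1, ?_⟩
    have := pr_eq hn o h1
    rw [h2] at this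
    simp [← this]
  · rintro ⟨h1, h2⟩
    refine ⟨h1, Subtype.ext ?_⟩
    rw [pr_eq hn o h1]
    by_contra h3
    apply h2
    simp only [Finset.coe_erase, Set.mem_diff, Finset.mem_coe, Set.mem_singleton_iff]
    exact ⟨pc_mem hn h1, h3⟩

/-- the point with given `u = yⁿ` and branches -/
noncomputable def pt (hn : n ≠ 0) (y c : ℂ) (hc : c ^ n = 1) : FermatFibre n :=
  ⟨(y, c * rt n (1 - y ^ n)), by
    show y ^ n + (c * rt n (1 - y ^ n)) ^ n = 1
    rw [mul_pow, hc, rt_pow hn]; ring⟩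

theorem pt_mem (hn : n ≠ 0) {y c : ℂ} (hc : c ^ n = 1) (hy : (y ^ n).re < 2 / 3) :
    pt hn y c hc ∈ setA n := by
  show 1 / 3 < ((c * rt n (1 - y ^ n)) ^ n).re
  rw [mul_pow, hc, rt_pow hn, one_mul, Complex.sub_re, Complex.one_re]
  linarith

theorem pt_pc (hn : n ≠ 0) {y c : ℂ} (hc : c ^ n = 1) (hy : (y ^ n).re < 2 / 3) :
    pc (pt hn y c hc) = c := by
  show (c * rt n (1 - y ^ n)) / rt n ((c * rt n (1 - y ^ n)) ^ n) = c
  rw [mul_pow, hc, rt_pow hn, one_mul]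
  apply mul_div_cancel_right₀
  apply rt_ne hn
  rw [Complex.sub_re, Complex.one_re]
  linarith

theorem pt_eq (hn : n ≠ 0) {x : FermatFibre n} (hx : x ∈ setA n) (c : ℂ) (hc : c ^ n = 1)
    (h : c = pc x) : pt hn x.1.1 c hc = x := by
  apply Subtype.ext
  refine Prod.ext rfl ?_
  show c * rt n (1 - x.1.1 ^ n) = x.1.2
  have : 1 - x.1.1 ^ n = x.1.2 ^ n := by linear_combination -x.2
  rw [this, h, pc_mul hn hx]

theorem pc_pow (hn : n ≠ 0) {x : FermatFibre n} (hx : x ∈ setA n) : pc x ^ n = 1 :=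
  (Polynomial.mem_nthRootsFinset (Nat.pos_of_ne_zero hn) (1 : ℂ)).1 (pc_mem hn hx)

theorem scale_re {x : FermatFibre n} (hx : x ∈ setA n) (s : unitInterval) :
    ((((s : ℝ) : ℂ) * x.1.1) ^ n).re < 2 / 3 := by
  have h1 : (x.1.1 ^ n).re < 2 / 3 := by
    have h2 : 1 / 3 < (x.1.2 ^ n).re := hx
    have := re_add x
    linarith
  rw [mul_pow, ← Complex.ofReal_pow, Complex.re_ofReal_mul]
  have h3 : 0 ≤ (s : ℝ) ^ n := pow_nonneg s.2.1 n
  have h4 : (s : ℝ) ^ n ≤ 1 := pow_le_one₀ s.2.1 s.2.2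
  rcases le_total 0 (x.1.1 ^ n).re with h | h
  · nlinarith
  · nlinarith

noncomputable def RA (hn : n ≠ 0) : C(unitInterval × setA n, FermatFibre n) where
  toFun v := pt hn (((v.1 : ℝ) : ℂ) * v.2.1.1.1) (pc v.2.1) (pc_pow hn v.2.2)
  continuous_toFun := by
    refine Continuous.subtype_mk ?_ _
    refine Continuous.prodMk (by fun_prop) ?_
    rw [continuous_iff_continuousAt]
    intro v
    refine ContinuousAt.mul ?_ ?_
    · exact ContinuousAt.comp (f := fun v : unitInterval × setA n => v.2.1) (pc_cont hn v.2.2)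
        (by fun_prop)
    · refine ContinuousAt.comp
        (f := fun v : unitInterval × setA n => 1 - (((v.1 : ℝ) : ℂ) * v.2.1.1.1) ^ n)
        (rt_cont ?_) (by fun_prop)
      have := scale_re v.2.2 v.1
      rw [Complex.sub_re, Complex.one_re]
      linarith

theorem RA_mem (hn : n ≠ 0) (v) : RA (n := n) hn v ∈ setA n := pt_mem hn (pc_pow hn v.2.2) (scale_re v.2.2 v.1)

theorem RA_one (hn : n ≠ 0) (x) : RA (n := n) hn (1, x) = x := by
  have := pt_eq hn x.2 (pc x.1) (pc_pow hn x.2) rfl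
  refine Eq.trans ?_ this
  apply Subtype.ext
  show (_, _) = (_, _)
  simp

theorem RA_zero (hn : n ≠ 0) (x y : setA n) (h : pc x.1 = pc y.1) :
    RA (n := n) hn (0, x) = RA hn (0, y) := by
  apply Subtype.ext
  show (_, _) = (_, _)
  simp [h]

theorem jA (hn : n ≠ 0) (x : FermatFibre n) (hx : x ∈ setA n) (y) (hy : y ∈ setA n)
    (h : pc x = pc y) :
    ∃ σ : C(unitInterval, FermatFibre n), σ 0 = x ∧ σ 1 = y ∧ ∀ t, σ t ∈ setA n := by
  have key : ∀ (z : setA n), JoinedIn (setA n) (RA hn (0, z)) z.1 := by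
    intro z
    refine ⟨⟨(RA hn).comp ⟨fun s => (s, z), by fun_prop⟩, rfl, RA_one hn z⟩, fun t => RA_mem hn _⟩
  have h1 := key ⟨x, hx⟩
  have h2 := key ⟨y, hy⟩
  rw [RA_zero hn ⟨x, hx⟩ ⟨y, hy⟩ h] at h1
  obtain ⟨γ, hγ⟩ := h1.symm.trans h2
  exact ⟨γ.toContinuousMap, γ.source, γ.target, hγ⟩

theorem vA (hn : n ≠ 0) (F : C(unitInterval, FermatFibre n) → ℂ) (hF : IsCocycle F) :
    ∃ g : FermatFibre n → ℂ, ∀ σ : C(unitInterval, FermatFibre n), (∀ t, σ t ∈ setA n) →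
      F σ = g (σ 1) - g (σ 0) := by
  refine hF.contract (RA hn) (RA_one hn) ?_
  intro σ t
  apply RA_zero
  let o : Rts n := ⟨_, pc_mem hn (σ 0).2⟩
  have := const_along (pr o) (pr_open hn o) (⟨fun t => (σ t).1, by fun_prop⟩)
    (fun t => (σ t).2) t 0
  have := congrArg Subtype.val this
  exact (pr_eq hn o (σ t).2).symm.trans (this.trans (pr_eq hn o (σ 0).2))

theorem vB (hn : n ≠ 0) (F : C(unitInterval, FermatFibre n) → ℂ) (hF : IsCocycle F) :
    ∃ g : FermatFibre n → ℂ, ∀ σ : C(unitInterval, FermatFibre n),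
      (∀ t, σ t ∈ swp n ⁻¹' setA n) → F σ = g (σ 1) - g (σ 0) := by
  let S : C(↥(swp n ⁻¹' setA n), setA n) := ⟨fun x => ⟨swp n x.1, x.2⟩, by fun_prop⟩
  refine hF.contract ((swp n).comp ((RA hn).comp ((ContinuousMap.id _).prodMap S))) ?_ ?_
  · intro x
    show swp n (RA hn (1, S x)) = _
    rw [RA_one]
    rfl
  · intro σ t
    show swp n (RA hn (0, S (σ t))) = swp n (RA hn (0, S (σ 0)))
    congr 1
    apply RA_zero
    let o : Rts n := ⟨_, pc_mem hn (S (σ 0)).2⟩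
    have := const_along (pr o) (pr_open hn o) (⟨fun t => (S (σ t)).1, by fun_prop⟩)
      (fun t => (S (σ t)).2) t 0
    have := congrArg Subtype.val this
    exact (pr_eq hn o (S (σ t)).2).symm.trans (this.trans (pr_eq hn o (S (σ 0)).2))

/-- points over the strip -/
noncomputable def ps (hn : n ≠ 0) (i j : Rts n) (u : ℂ) : FermatFibre n :=
  ⟨(j * rt n u, i * rt n (1 - u)), by
    show (j * rt n u : ℂ) ^ n + (i * rt n (1 - u)) ^ n = 1
    rw [mul_pow, mul_pow, Rts_pow hn, Rts_pow hn, rt_pow hn, rt_pow hn]; ring⟩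

theorem ps_A (hn : n ≠ 0) (i j : Rts n) {u : ℂ} (h2 : u.re < 2 / 3) :
    ps hn i j u ∈ setA n ∧ pc (ps hn i j u) = i := by
  have h : 1 / 3 < (1 - u).re := by
    rw [Complex.sub_re, Complex.one_re]; linarith
  have e : (i * rt n (1 - u) : ℂ) ^ n = 1 - u := by
    rw [mul_pow, Rts_pow hn, rt_pow hn, one_mul]
  constructor
  · show 1 / 3 < ((i * rt n (1 - u) : ℂ) ^ n).re
    rwa [e]
  · show (i * rt n (1 - u) : ℂ) / rt n ((i * rt n (1 - u) : ℂ) ^ n) = i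
    rw [e]
    exact mul_div_cancel_right₀ _ (rt_ne hn h)

theorem ps_B (hn : n ≠ 0) (i j : Rts n) {u : ℂ} (h1 : 1 / 3 < u.re) :
    swp n (ps hn i j u) ∈ setA n ∧ pc (swp n (ps hn i j u)) = j := by
  have : swp n (ps hn i j u) = ps hn j i (1 - u) := by
    apply Subtype.ext
    refine Prod.ext rfl ?_
    show (j * rt n u : ℂ) = j * rt n (1 - (1 - u))
    rw [sub_sub_cancel]
  rw [this]
  apply ps_A
  rw [Complex.sub_re, Complex.one_re]; linarith

theorem ps_eq (hn : n ≠ 0) (i j : Rts n) {x : FermatFibre n} (hx : x ∈ setA n)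
    (hx' : swp n x ∈ setA n) (hi : pc x = i) (hj : pc (swp n x) = j) :
    ps hn i j (x.1.1 ^ n) = x := by
  have h1 := pc_mul hn hx
  have h2 := pc_mul hn hx'
  rw [hi] at h1
  rw [hj] at h2
  apply Subtype.ext
  refine Prod.ext h2 ?_
  show (i * rt n (1 - x.1.1 ^ n) : ℂ) = x.1.2
  have : 1 - x.1.1 ^ n = x.1.2 ^ n := by linear_combination -x.2
  rw [this, h1]

theorem jAB (hn : n ≠ 0) (i j : Rts n) (x : FermatFibre n) (hx : x ∈ setA n)
    (hx' : swp n x ∈ setA n) (y : FermatFibre n) (hy : y ∈ setA n) (hy' : swp n y ∈ setA n)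
    (hxi : pc x = i) (hyi : pc y = i) (hxj : pc (swp n x) = j) (hyj : pc (swp n y) = j) :
    ∃ σ : C(unitInterval, FermatFibre n), σ 0 = x ∧ σ 1 = y ∧
      ∀ t, σ t ∈ setA n ∩ swp n ⁻¹' setA n := by
  let u : unitInterval → ℂ := fun s =>
    (((1 - s : ℝ)) : ℂ) * x.1.1 ^ n + ((s : ℝ) : ℂ) * y.1.1 ^ n
  have hu : Continuous u := by fun_prop
  have hre : ∀ s, 1 / 3 < (u s).re ∧ (u s).re < 2 / 3 := by
    intro s
    have e : (u s).re = (1 - s : ℝ) * (x.1.1 ^ n).re + (s : ℝ) * (y.1.1 ^ n).re := by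
      simp only [u, Complex.add_re, Complex.re_ofReal_mul]
    have a1 : 1 / 3 < (x.1.2 ^ n).re := hx
    have a2 : 1 / 3 < (x.1.1 ^ n).re := hx'
    have a3 : 1 / 3 < (y.1.2 ^ n).re := hy
    have a4 : 1 / 3 < (y.1.1 ^ n).re := hy'
    have a5 := re_add x
    have a6 := re_add y
    have s0 := s.2.1
    have s1 := s.2.2
    rw [e]
    have hseg := (convex_Ioo (1 / 3 : ℝ) (2 / 3)) (x := (x.1.1 ^ n).re) (y := (y.1.1 ^ n).re)
      ⟨a2, by linarith⟩ ⟨a4, by linarith⟩ (a := 1 - (s : ℝ)) (b := s) (by linarith) s0 (by ring)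
    simpa using hseg
  refine ⟨⟨fun s => ps hn i j (u s), ?_⟩, ?_, ?_, ?_⟩
  · refine Continuous.subtype_mk ?_ _
    rw [continuous_iff_continuousAt]
    intro s
    refine ContinuousAt.prodMk ?_ ?_
    · refine ContinuousAt.mul continuousAt_const ?_
      exact ContinuousAt.comp (f := u) (rt_cont (hre s).1) hu.continuousAt
    · refine ContinuousAt.mul continuousAt_const ?_
      refine ContinuousAt.comp (f := fun s => 1 - u s) (rt_cont ?_)
        (continuousAt_const.sub hu.continuousAt)
      rw [Complex.sub_re, Complex.one_re]; linarith [(hre s).2]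
  · show ps hn i j (u 0) = x
    have : u 0 = x.1.1 ^ n := by simp [u]
    rw [this, ps_eq hn i j hx hx' hxi hxj]
  · show ps hn i j (u 1) = y
    have : u 1 = y.1.1 ^ n := by simp [u]
    rw [this, ps_eq hn i j hy hy' hyi hyj]
  · intro s
    exact ⟨(ps_A hn i j (hre s).2).1, (ps_B hn i j (hre s).1).1⟩

theorem fermat_dim (hn : n ≠ 0) :
    finrank ℂ (H1.obj (TopCat.of (FermatFibre n))) + (n + n) = n * n + 1 := by
  have hone : (1 : ℂ) ∈ Polynomial.nthRootsFinset n (1 : ℂ) := by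
    rw [Polynomial.mem_nthRootsFinset (Nat.pos_of_ne_zero hn)]
    simp
  let o : Rts n := ⟨1, hone⟩
  haveI : Nonempty (Rts n) := ⟨o⟩
  have hre : ∀ x : FermatFibre n, (x.1.1 ^ n).re + (x.1.2 ^ n).re = 1 := re_add
  have := mv (X := FermatFibre n) (K := Rts n) (L := Rts n) (A := setA n)
    (B := swp n ⁻¹' setA n) isOpen_setA (isOpen_setA.preimage (swp n).continuous)
    (by
      intro x
      by_contra! h
      have h1 : ¬ (1 / 3 < (x.1.2 ^ n).re) := h.1
      have h2 : ¬ (1 / 3 < (x.1.1 ^ n).re) := h.2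
      have := hre x
      linarith)
    (pr o) (fun x => pr o (swp n x)) (pr_open hn o)
    (fun i => (pr_open hn o i).preimage (swp n).continuous)
    ⟨fun x => max 0 (min 1 (3 * (x.1.1 ^ n).re - 1)), by
      have : Continuous fun x : FermatFibre n => (x.1.1 ^ n).re :=
        Complex.continuous_re.comp (by fun_prop)
      fun_prop⟩
    (by
      intro x h
      have h2 : ¬ (1 / 3 < (x.1.1 ^ n).re) := h
      show max 0 (min 1 (3 * (x.1.1 ^ n).re - 1)) = 0
      apply max_eq_left
      apply (min_le_right _ _).trans
      linarith)
    (by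
      intro x h
      have h2 : ¬ (1 / 3 < (x.1.2 ^ n).re) := h
      have := hre x
      show max 0 (min 1 (3 * (x.1.1 ^ n).re - 1)) = 1
      rw [min_eq_left (by linarith)]
      norm_num)
    (by
      intro x hx y hy h
      apply jA hn x hx y hy
      rw [← pr_eq hn o hx, ← pr_eq hn o hy, h])
    (by
      intro x hx y hy h
      obtain ⟨σ, h0, h1, h2⟩ := jA hn (swp n x) hx (swp n y) hy
        (by rw [← pr_eq hn o hx, ← pr_eq hn o hy, h])
      refine ⟨(swp n).comp σ, ?_, ?_, ?_⟩
      · show swp n (σ 0) = x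
        rw [h0]; rfl
      · show swp n (σ 1) = y
        rw [h1]; rfl
      · exact h2)
    (by
      intro x hx y hy h1 h2
      apply jAB hn (pr o y) (pr o (swp n y)) x hx.1 hx.2 y hy.1 hy.2
      · rw [← h1, pr_eq hn o hx.1]
      · rw [pr_eq hn o hy.1]
      · rw [← h2, pr_eq hn o hx.2]
      · rw [pr_eq hn o hy.2])
    (by
      intro i j
      obtain ⟨a1, a2⟩ := ps_A hn i j (u := 1 / 2) (by norm_num)
      obtain ⟨b1, b2⟩ := ps_B hn i j (u := 1 / 2) (by norm_num)
      refine ⟨ps hn i j (1 / 2), a1, b1, Subtype.ext ?_, Subtype.ext ?_⟩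
      · rw [pr_eq hn o a1, a2]
      · show ((pr o (swp n (ps hn i j (1 / 2))) : Rts n) : ℂ) = j
        rw [pr_eq hn o b1, b2])
    (vA hn) (vB hn)
  rwa [card_Rts hn] at this

end Geometry

end FermatH1

theorem statement9 (n : ℕ) (hn : 1 ≤ n) :
    Module.finrank ℂ (H1.obj (TopCat.of (FermatFibre n))) = (n - 1) ^ 2 := by
  have h := FermatH1.fermat_dim (n := n) (by omega)
  obtain ⟨m, rfl⟩ : ∃ m, n = m + 1 := ⟨n - 1, by omega⟩
  rw [Nat.add_sub_cancel]
  nlinarith
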